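/- Let k ≥ 1, r = 2k+2 and n ≥ r+1 be integers, let A be an r×n sign matrix, and fix j ≥ 2. Suppose that for every plain travel P of A whose downward moves all occur at columns ≥ j (possibly no downward moves at all) there exists a set S ⊆ {1, …, j−1} of columns with |S| ≤ k such that, for every set R of columns for which the top travel of A_R follows the path P, the top travel of (A_R)_S reaches row r at some column ≤ j−1. Then at most one plain travel of A whose downward moves all occur at columns ≥ j is k-neighborly. -/

import Mathlib

/-- An `r × n` sign matrix: entries in `{+1, -1}` (1-indexed: `1 ≤ i ≤ r`, `1 ≤ j ≤ n`). -/
def IsSignMatrix (r n : ℕ) (A : ℕ → ℕ → ℤ) : Prop :=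
  ∀ i j, 1 ≤ i → i ≤ r → 1 ≤ j → j ≤ n → A i j = 1 ∨ A i j = -1

/-- `A_S`: the matrix obtained from `A` by negating every entry of each column in `S`. -/
def reorient (A : ℕ → ℕ → ℤ) (S : Finset ℕ) : ℕ → ℕ → ℤ :=
  fun i j => if j ∈ S then -A i j else A i j

/-- The first column `c'` with `c < c' ≤ n` where row `i` changes sign relative to
entry `a_{i,c}`, if such a column exists. -/
def rowChange (A : ℕ → ℕ → ℤ) (n i c : ℕ) : Option ℕ :=
  (List.range (n + 1)).find? fun c' => decide (c < c' ∧ A i c' ≠ A i c)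

/-- `ttEntry A n i` is the column at which the top travel of `A` enters row `i`
(rows and columns 1-indexed): the travel enters row 1 at column 1, and, having entered
row `i` at column `c`, it enters row `i+1` at the first sign change of row `i` after
column `c` (if any).  The value `some` at the "virtual" row `r+1` means the top travel
had a sign change in the bottom row `r`, i.e. the top travel is positive. -/
def ttEntry (A : ℕ → ℕ → ℤ) (n : ℕ) : ℕ → Option ℕ
  | 0 => none
  | 1 => some 1
  | i + 2 => (ttEntry A n (i + 1)).bind (rowChange A n (i + 1))

/-- The top travel of the `r × n` sign matrix `A` is positive: it contains two
horizontally consecutive entries of row `r` with opposite signs. -/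
def ttPositive (A : ℕ → ℕ → ℤ) (r n : ℕ) : Prop :=
  (ttEntry A n (r + 1)).isSome

/-- `A` is `k`-neighborly: for every set `S` of at most `k` columns, the top travel
of `A_S` is not positive. -/
def IsNeighborly (A : ℕ → ℕ → ℤ) (r n k : ℕ) : Prop :=
  ∀ S : Finset ℕ, S ⊆ Finset.Icc 1 n → S.card ≤ k → ¬ ttPositive (reorient A S) r n

/-- A plain travel of an `r × n` sign matrix, identified with the set `D` of columns of
its downward (vertical) moves: the columns `2 ≤ j₁ < ⋯ < j_{s-1} ≤ n` with `s ≤ r`. -/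
def IsPlainTravel (r n : ℕ) (D : Finset ℕ) : Prop :=
  D ⊆ Finset.Icc 2 n ∧ D.card ≤ r - 1

/-- The top travel of `A` follows exactly the plain travel with downward-move columns `D`:
it makes its downward moves precisely at the columns of `D` (entering rows `2, …, |D|+1`
there) and then ends at column `n` in row `|D|+1` without a further sign change. -/
def ttFollows (A : ℕ → ℕ → ℤ) (n : ℕ) (D : Finset ℕ) : Prop :=
  ttEntry A n (D.card + 2) = none ∧
  ∀ c, c ∈ D ↔ ∃ i, 2 ≤ i ∧ i ≤ D.card + 1 ∧ ttEntry A n i = some c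

/-- The plain travel `D` of `A` is `k`-neighborly: there is a set `R` of columns such that
the top travel of `A_R` follows exactly the path `D` and `A_R` is a `k`-neighborly matrix. -/
def IsNeighborlyTravel (A : ℕ → ℕ → ℤ) (r n k : ℕ) (D : Finset ℕ) : Prop :=
  ∃ R : Finset ℕ, R ⊆ Finset.Icc 1 n ∧ ttFollows (reorient A R) n D ∧
    IsNeighborly (reorient A R) r n k

/-!
Two reorientations of `A` differ by the reorientation of a set `T` of columns, and it is enough to
show that `T` contains all of the columns `1, …, n` or none of them: the travel does not notice a
global change of sign. A travel without downward moves before column `j` runs along row `1` up to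
column `j - 1`, so row `1` is constant there in both reorientations, which settles the columns
before `j`. After the further reorientation of `S`, both travels therefore agree up to column
`j - 1`, reach the bottom row at the same column there, and by neighborliness never see a sign
change afterwards; so the bottom row settles the columns from `j` on.
-/

section Reorientation

variable {A : ℕ → ℕ → ℤ} {S T : Finset ℕ} {r n i x y : ℕ}

theorem IsSignMatrix.ne_zero (hA : IsSignMatrix r n A) (hi : 1 ≤ i) (hir : i ≤ r) (hx : 1 ≤ x)
    (hxn : x ≤ n) : A i x ≠ 0 := by
  rcases hA i x hi hir hx hxn with h | h <;> simp [h]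

theorem IsSignMatrix.reorient (hA : IsSignMatrix r n A) (S : Finset ℕ) :
    IsSignMatrix r n (reorient A S) := by
  intro i x hi hir hx hxn
  have := hA i x hi hir hx hxn
  unfold _root_.reorient
  split_ifs <;> omega

theorem reorient_empty (A : ℕ → ℕ → ℤ) : reorient A ∅ = A := by
  ext i x
  simp only [reorient, Finset.notMem_empty, if_false]

theorem reorient_reorient (A : ℕ → ℕ → ℤ) (S T : Finset ℕ) :
    reorient (reorient A S) T = reorient A (symmDiff S T) := by
  ext i x
  by_cases hS : x ∈ S <;> by_cases hT : x ∈ T <;> simp [reorient, Finset.mem_symmDiff, hS, hT]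

theorem reorient_comm (A : ℕ → ℕ → ℤ) (S T : Finset ℕ) :
    reorient (reorient A S) T = reorient (reorient A T) S := by
  rw [reorient_reorient, reorient_reorient, symmDiff_comm]

theorem reorient_symmDiff (A : ℕ → ℕ → ℤ) (S T : Finset ℕ) :
    reorient (reorient A S) (symmDiff S T) = reorient A T := by
  rw [reorient_reorient, symmDiff_symmDiff_cancel_left]

theorem reorient_eq_reorient_iff (h : x ∈ T ↔ y ∈ T) :
    reorient A T i x = reorient A T i y ↔ A i x = A i y := by
  by_cases hy : y ∈ T <;> simp [reorient, h, hy]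

theorem mem_iff_mem_of_reorient_eq (hx : A i x ≠ 0) (h : A i x = A i y)
    (hT : reorient A T i x = reorient A T i y) : x ∈ T ↔ y ∈ T := by
  unfold reorient at hT
  split_ifs at hT with hxT hyT hyT <;> first | omega | simp [hxT, hyT]

end Reorientation

section TopTravel

variable {A : ℕ → ℕ → ℤ} {T : Finset ℕ} {r n m i c d x : ℕ}

theorem rowChange_eq_some_iff : rowChange A n i c = some d ↔
    c < d ∧ d ≤ n ∧ A i d ≠ A i c ∧ ∀ x, c < x → x < d → A i x = A i c := by
  simp only [rowChange, List.find?_range_eq_some, decide_eq_true_eq, List.mem_range,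
    Bool.not_eq_true', decide_eq_false_iff_not, not_and, not_not, Nat.lt_succ_iff]
  tauto

theorem rowChange_eq_none_iff :
    rowChange A n i c = none ↔ ∀ x, c < x → x ≤ n → A i x = A i c := by
  simp only [rowChange, List.find?_eq_none, decide_eq_true_eq, List.mem_range, not_and, not_not,
    Nat.lt_succ_iff]
  tauto

theorem rowChange_reorient_eq_some (hT : ∀ x, c ≤ x → x ≤ d → (x ∈ T ↔ c ∈ T))
    (h : rowChange A n i c = some d) : rowChange (reorient A T) n i c = some d := by
  obtain ⟨hcd, hdn, hne, heq⟩ := rowChange_eq_some_iff.1 h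
  refine rowChange_eq_some_iff.2 ⟨hcd, hdn, ?_, fun x hcx hxd => ?_⟩
  · rwa [Ne, reorient_eq_reorient_iff (hT d hcd.le le_rfl)]
  · exact (reorient_eq_reorient_iff (hT x hcx.le hxd.le)).2 (heq x hcx hxd)

theorem ttEntry_add_two_eq_some_iff : ttEntry A n (i + 2) = some d ↔
    ∃ c, ttEntry A n (i + 1) = some c ∧ rowChange A n (i + 1) c = some d :=
  Option.bind_eq_some_iff

theorem one_le_of_ttEntry_eq_some : ∀ {i c : ℕ}, ttEntry A n i = some c → 1 ≤ i ∧ 1 ≤ c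
  | 0, _, h => by simp [ttEntry] at h
  | 1, _, h => ⟨le_rfl, (Option.some.inj h).le⟩
  | i + 2, _, h => by
    obtain ⟨b, -, hbc⟩ := ttEntry_add_two_eq_some_iff.1 h
    have := (rowChange_eq_some_iff.1 hbc).1
    omega

theorem le_of_ttEntry_eq_some (hi : 2 ≤ i) (h : ttEntry A n i = some c) : c ≤ n := by
  obtain ⟨i, rfl⟩ := Nat.exists_eq_add_of_le' hi
  obtain ⟨_, -, hc⟩ := ttEntry_add_two_eq_some_iff.1 h
  exact (rowChange_eq_some_iff.1 hc).2.1

theorem ttEntry_eq_none_of_lt (h : ttEntry A n (i + 1) = none) (him : i < m) :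
    ttEntry A n m = none := by
  induction m, him using Nat.le_induction with
  | base => exact h
  | succ m hm ih =>
    obtain ⟨m, rfl⟩ := Nat.exists_eq_add_of_lt hm
    simp only [ttEntry, ih, Option.bind_none]

theorem ttEntry_reorient_eq_some (hT : ∀ x, 1 ≤ x → x ≤ m → (x ∈ T ↔ 1 ∈ T)) :
    ∀ {i c : ℕ}, c ≤ m → ttEntry A n i = some c → ttEntry (reorient A T) n i = some c
  | 0, _, _, h => by simp [ttEntry] at h
  | 1, _, _, h => h
  | i + 2, d, hd, h => by
    obtain ⟨c, hc, hcd⟩ := ttEntry_add_two_eq_some_iff.1 h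
    have hc1 := (one_le_of_ttEntry_eq_some hc).2
    have hlt : c < d := (rowChange_eq_some_iff.1 hcd).1
    refine ttEntry_add_two_eq_some_iff.2
      ⟨c, ttEntry_reorient_eq_some hT (by omega) hc, rowChange_reorient_eq_some ?_ hcd⟩
    intro x hcx hxd
    rw [hT x (by omega) (by omega), hT c hc1 (by omega)]

theorem apply_eq_of_not_ttPositive (h : ¬ ttPositive A r n) (hc : ttEntry A n r = some c)
    (hcx : c < x) (hxn : x ≤ n) : A r x = A r c := by
  obtain ⟨r, rfl⟩ := Nat.exists_eq_add_of_le' (one_le_of_ttEntry_eq_some hc).1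
  have hrow : rowChange A n (r + 1) c = none := by simpa [ttPositive, ttEntry, hc] using h
  exact rowChange_eq_none_iff.1 hrow x hcx hxn

end TopTravel

namespace ttFollows

variable {A : ℕ → ℕ → ℤ} {n j x : ℕ} {D D' T : Finset ℕ}

theorem mem_iff (h : ttFollows A n D) {c : ℕ} :
    c ∈ D ↔ ∃ i, 2 ≤ i ∧ ttEntry A n i = some c := by
  refine (h.2 c).trans (exists_congr fun i => and_congr_right fun _ =>
    and_iff_right_of_imp fun hc => ?_)
  by_contra! hi
  simp [ttEntry_eq_none_of_lt h.1 hi] at hc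

theorem row_one_eq (h : ttFollows A n D) (hD : ∀ c ∈ D, j ≤ c) (hx : 1 ≤ x) (hxj : x < j)
    (hxn : x ≤ n) : A 1 x = A 1 1 := by
  rcases hx.eq_or_lt with rfl | hx
  · rfl
  cases hd : rowChange A n 1 1 with
  | none => exact rowChange_eq_none_iff.1 hd x hx hxn
  | some d =>
    have hdD : d ∈ D := h.mem_iff.2 ⟨2, le_rfl, hd⟩
    exact (rowChange_eq_some_iff.1 hd).2.2.2 x hx (hxj.trans_le (hD d hdD))

theorem mem_iff_one_mem_of_lt (h : ttFollows A n D) (hD : ∀ c ∈ D, j ≤ c)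
    (h' : ttFollows (reorient A T) n D') (hD' : ∀ c ∈ D', j ≤ c) (hx : 1 ≤ x) (hxj : x < j)
    (hxn : x ≤ n) (h0 : A 1 x ≠ 0) : x ∈ T ↔ 1 ∈ T :=
  mem_iff_mem_of_reorient_eq h0 (h.row_one_eq hD hx hxj hxn) (h'.row_one_eq hD' hx hxj hxn)

theorem subset_of_reorient (h : ttFollows A n D) (h' : ttFollows (reorient A T) n D')
    (hT : ∀ x, 1 ≤ x → x ≤ n → (x ∈ T ↔ 1 ∈ T)) : D ⊆ D' := by
  intro c hc
  obtain ⟨i, hi, hic⟩ := h.mem_iff.1 hc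
  exact h'.mem_iff.2 ⟨i, hi, ttEntry_reorient_eq_some hT (le_of_ttEntry_eq_some hi hic) hic⟩

theorem eq_of_reorient (h : ttFollows A n D) (h' : ttFollows (reorient A T) n D')
    (hT : ∀ x, 1 ≤ x → x ≤ n → (x ∈ T ↔ 1 ∈ T)) : D = D' := by
  refine (h.subset_of_reorient h' hT).antisymm (h'.subset_of_reorient (T := T) ?_ hT)
  rwa [reorient_reorient, symmDiff_self, Finset.bot_eq_empty, reorient_empty]

end ttFollows

section Neighborly

variable {A : ℕ → ℕ → ℤ} {k r n j c x : ℕ} {S T : Finset ℕ}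

theorem mem_iff_mem_of_not_ttPositive (hA : ¬ ttPositive A r n)
    (hAT : ¬ ttPositive (reorient A T) r n) (hc : ttEntry A n r = some c)
    (hcT : ttEntry (reorient A T) n r = some c) (hcx : c < x) (hxn : x ≤ n) (h0 : A r x ≠ 0) :
    x ∈ T ↔ c ∈ T :=
  mem_iff_mem_of_reorient_eq h0 (apply_eq_of_not_ttPositive hA hc hcx hxn)
    (apply_eq_of_not_ttPositive hAT hcT hcx hxn)

theorem mem_iff_one_mem_of_isNeighborly (hA : IsSignMatrix r n A)
    (hN : IsNeighborly A r n k) (hNT : IsNeighborly (reorient A T) r n k)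
    (hT : ∀ x, 1 ≤ x → x < j → (x ∈ T ↔ 1 ∈ T)) (hS : S ⊆ Finset.Icc 1 n) (hSk : S.card ≤ k)
    (hc : ttEntry (reorient A S) n r = some c) (hcj : c < j) (hcx : c < x) (hxn : x ≤ n) :
    x ∈ T ↔ 1 ∈ T := by
  obtain ⟨hr, hc1⟩ := one_le_of_ttEntry_eq_some hc
  have hcT : ttEntry (reorient (reorient A S) T) n r = some c :=
    ttEntry_reorient_eq_some (fun y hy hyc => hT y hy (by omega)) le_rfl hc
  have hpos : ¬ ttPositive (reorient (reorient A S) T) r n := by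
    rw [reorient_comm]
    exact hNT S hS hSk
  rw [← hT c hc1 hcj]
  exact mem_iff_mem_of_not_ttPositive (hN S hS hSk) hpos hc hcT hcx hxn
    ((hA.reorient S).ne_zero hr le_rfl (by omega) hxn)

end Neighborly

theorem statement_2_general {k r n j : ℕ} {A : ℕ → ℕ → ℤ} (hA : IsSignMatrix r n A)
    {D₁ D₂ : Finset ℕ} (hD₁ : ∀ c ∈ D₁, j ≤ c) (hD₂ : ∀ c ∈ D₂, j ≤ c)
    (hN₁ : IsNeighborlyTravel A r n k D₁) (hN₂ : IsNeighborlyTravel A r n k D₂)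
    (H : ∀ R ⊆ Finset.Icc 1 n, ttFollows (reorient A R) n D₁ →
      ∃ S ⊆ Finset.Icc 1 (j - 1), S.card ≤ k ∧
        ∃ c, c ≤ j - 1 ∧ ttEntry (reorient (reorient A R) S) n r = some c) :
    D₁ = D₂ := by
  obtain ⟨R₁, hR₁, hF₁, hN₁⟩ := hN₁
  obtain ⟨R₂, -, hF₂, hN₂⟩ := hN₂
  obtain ⟨S, hS, hSk, c, hcj, hc⟩ := H R₁ hR₁ hF₁
  obtain ⟨hr, hc1⟩ := one_le_of_ttEntry_eq_some hc
  rw [← reorient_symmDiff A R₁ R₂] at hF₂ hN₂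
  have hlt : ∀ x, 1 ≤ x → x < j → x ≤ n → (x ∈ symmDiff R₁ R₂ ↔ 1 ∈ symmDiff R₁ R₂) :=
    fun x hx hxj hxn => hF₁.mem_iff_one_mem_of_lt hD₁ hF₂ hD₂ hx hxj hxn
      ((hA.reorient R₁).ne_zero le_rfl hr hx hxn)
  refine hF₁.eq_of_reorient hF₂ fun x hx hxn => ?_
  rcases lt_or_ge x j with hxj | hjx
  · exact hlt x hx hxj hxn
  · exact mem_iff_one_mem_of_isNeighborly (hA.reorient R₁) hN₁ hN₂
      (fun y hy hyj => hlt y hy hyj (by omega))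
      (hS.trans (Finset.Icc_subset_Icc_right (by omega))) hSk hc (by omega) (by omega) hxn

/-- Let `k ≥ 1`, `r = 2k+2`, `n ≥ r+1`, `A` an `r × n` sign matrix and `j ≥ 2`.
Suppose that for every plain travel `P` of `A` whose downward moves all occur at columns `≥ j`
there is a set `S ⊆ {1,…,j-1}` with `|S| ≤ k` such that, for every set `R` of columns for which
the top travel of `A_R` follows `P`, the top travel of `(A_R)_S` reaches row `r` at some column
`≤ j-1`.  Then at most one plain travel of `A` with all downward moves at columns `≥ j` is
`k`-neighborly. -/
theorem statement_2 (k r n : ℕ) (hk : 1 ≤ k) (hr : r = 2 * k + 2) (hn : r + 1 ≤ n)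
    (A : ℕ → ℕ → ℤ) (hA : IsSignMatrix r n A) (j : ℕ) (hj : 2 ≤ j)
    (H : ∀ D : Finset ℕ, IsPlainTravel r n D → (∀ c ∈ D, j ≤ c) →
      ∃ S : Finset ℕ, S ⊆ Finset.Icc 1 (j - 1) ∧ S.card ≤ k ∧
        ∀ R : Finset ℕ, R ⊆ Finset.Icc 1 n → ttFollows (reorient A R) n D →
          ∃ c, c ≤ j - 1 ∧ ttEntry (reorient (reorient A R) S) n r = some c) :
    ∀ D₁ D₂ : Finset ℕ,
      IsPlainTravel r n D₁ → (∀ c ∈ D₁, j ≤ c) → IsNeighborlyTravel A r n k D₁ →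
      IsPlainTravel r n D₂ → (∀ c ∈ D₂, j ≤ c) → IsNeighborlyTravel A r n k D₂ →
      D₁ = D₂ := by
  intro D₁ D₂ hP₁ hD₁ hN₁ _ hD₂ hN₂
  obtain ⟨S, hS, hSk, hR⟩ := H D₁ hP₁ hD₁
  exact statement_2_general hA hD₁ hD₂ hN₁ hN₂ fun R hRn hF => ⟨S, hS, hSk, hR R hRn hF⟩
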